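/- R⁻(2,1) = R⁻(1,2), and for all positive integers a and b with a + b ≠ 3, R⁻(2,1) < R⁻(a,b). -/

import Mathlib

/-!
Integrating the derivative of `t ^ a * (1 - t) ^ b` over `[0, 1]` and over `[1/2, 1]` shows that one
more success raises `I a b` by exactly `2 ^ (-(a + b)) / (a * B(a, b))`. For positive integers with
`n = a + b - 1` this is `C(n, a) / 2 ^ (n + 1)`, which is less than `1/4` as soon as `n ≥ 3`. Since
`h` is 1-Lipschitz, and the reflection `t ↦ 1 - t` turns failures into successes, both terms of
`R⁻(a, b)` then exceed `-1/4 = R⁻(2, 1)`. Besides `a + b = 3`, this leaves only `a = b = 1`;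
whenever `a = b`, the current probability is `1/2`, where `h` is minimal, so no reward is negative.
-/

/-- The Beta function `B(a,b) = ∫₀¹ t^(a-1) (1-t)^(b-1) dt`. -/
noncomputable def betaFn (a b : ℝ) : ℝ := ∫ t in (0:ℝ)..1, t ^ (a - 1) * (1 - t) ^ (b - 1)

/-- `I(a,b)`: the probability that a `Beta(a,b)` random variable is `≥ 1/2`. -/
noncomputable def I (a b : ℝ) : ℝ :=
  (1 / betaFn a b) * ∫ t in (1/2 : ℝ)..1, t ^ (a - 1) * (1 - t) ^ (b - 1)

/-- `h(x) = max (x, 1-x)`. -/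
noncomputable def hFn (x : ℝ) : ℝ := max x (1 - x)

/-- Expected stage-wise reward. -/
noncomputable def R (a b : ℝ) : ℝ :=
  a / (a + b) * (hFn (I (a + 1) b) - hFn (I a b)) +
    b / (a + b) * (hFn (I a (b + 1)) - hFn (I a b))

/-- Optimistic knowledge-gradient reward. -/
noncomputable def Rplus (a b : ℝ) : ℝ :=
  max (hFn (I (a + 1) b) - hFn (I a b)) (hFn (I a (b + 1)) - hFn (I a b))

/-- Pessimistic knowledge-gradient reward. -/
noncomputable def Rminus (a b : ℝ) : ℝ :=
  min (hFn (I (a + 1) b) - hFn (I a b)) (hFn (I a (b + 1)) - hFn (I a b))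

open MeasureTheory Set

/-- The upper incomplete Beta function; its first argument is the lower limit of integration. -/
noncomputable def upperBeta (x a b : ℝ) : ℝ := ∫ t in x..1, t ^ (a - 1) * (1 - t) ^ (b - 1)

section BetaIntegral

variable {a b x : ℝ}

lemma betaFn_eq_upperBeta (a b : ℝ) : betaFn a b = upperBeta 0 a b := rfl

lemma I_eq_upperBeta_div (a b : ℝ) : I a b = upperBeta (1 / 2) a b / betaFn a b :=
  one_div_mul_eq_div _ _

lemma ofReal_rpow_mul_one_sub_rpow (a b : ℝ) {t : ℝ} (ht : t ∈ Icc (0 : ℝ) 1) :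
    ((t ^ (a - 1) * (1 - t) ^ (b - 1) : ℝ) : ℂ) =
      (t : ℂ) ^ ((a : ℂ) - 1) * (1 - (t : ℂ)) ^ ((b : ℂ) - 1) := by
  rw [Complex.ofReal_mul, Complex.ofReal_cpow ht.1, Complex.ofReal_cpow (sub_nonneg.2 ht.2)]
  push_cast
  rfl

lemma intervalIntegrable_rpow_mul_one_sub_rpow (ha : 0 < a) (hb : 0 < b) {y : ℝ}
    (hx : x ∈ Icc (0 : ℝ) 1) (hy : y ∈ Icc (0 : ℝ) 1) :
    IntervalIntegrable (fun t : ℝ ↦ t ^ (a - 1) * (1 - t) ^ (b - 1)) volume x y := by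
  have hcomplex := Complex.betaIntegral_convergent (u := a) (v := b) (by simpa) (by simpa)
  have hunit : IntervalIntegrable (fun t : ℝ ↦ t ^ (a - 1) * (1 - t) ^ (b - 1)) volume 0 1 := by
    rw [intervalIntegrable_iff_integrableOn_Icc_of_le zero_le_one] at hcomplex ⊢
    refine IntegrableOn.congr_fun hcomplex.re (fun t ht ↦ ?_) measurableSet_Icc
    simp only [← ofReal_rpow_mul_one_sub_rpow a b ht, RCLike.re_to_complex, Complex.ofReal_re]
  refine hunit.mono_set ?_
  rw [uIcc_of_le zero_le_one]
  exact uIcc_subset_Icc hx hy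

lemma betaFn_eq_beta (ha : 0 < a) (hb : 0 < b) : betaFn a b = ProbabilityTheory.beta a b := by
  have hcast : (betaFn a b : ℂ) = Complex.betaIntegral a b := by
    rw [betaFn, Complex.betaIntegral, ← intervalIntegral.integral_ofReal]
    refine intervalIntegral.integral_congr fun t ht ↦ ?_
    exact ofReal_rpow_mul_one_sub_rpow a b (by rwa [uIcc_of_le zero_le_one] at ht)
  rw [ProbabilityTheory.beta_eq_betaIntegralReal a b ha hb, ← hcast, Complex.ofReal_re]

lemma betaFn_pos (ha : 0 < a) (hb : 0 < b) : 0 < betaFn a b :=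
  betaFn_eq_beta ha hb ▸ ProbabilityTheory.beta_pos ha hb

lemma upperBeta_one_sub (x a b : ℝ) :
    upperBeta (1 - x) b a = ∫ t in (0 : ℝ)..x, t ^ (a - 1) * (1 - t) ^ (b - 1) := by
  simpa [upperBeta, mul_comm] using intervalIntegral.integral_comp_sub_left
    (a := 1 - x) (b := 1) (fun t : ℝ ↦ t ^ (a - 1) * (1 - t) ^ (b - 1)) 1

lemma betaFn_comm (a b : ℝ) : betaFn a b = betaFn b a := by
  rw [betaFn_eq_upperBeta b a, ← sub_self 1, upperBeta_one_sub, betaFn]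

lemma upperBeta_add_upperBeta_one_sub (ha : 0 < a) (hb : 0 < b) (hx : x ∈ Icc (0 : ℝ) 1) :
    upperBeta x a b + upperBeta (1 - x) b a = betaFn a b := by
  rw [upperBeta_one_sub, add_comm, upperBeta, intervalIntegral.integral_add_adjacent_intervals
    (intervalIntegrable_rpow_mul_one_sub_rpow ha hb (left_mem_Icc.2 zero_le_one) hx)
    (intervalIntegrable_rpow_mul_one_sub_rpow ha hb hx (right_mem_Icc.2 zero_le_one)), betaFn]

lemma upperBeta_one_right (ha : 0 < a) (x : ℝ) : upperBeta x a 1 = (1 - x ^ a) / a := by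
  simp [upperBeta, integral_rpow (Or.inl (by linarith : -1 < a - 1))]

lemma natCast_mul_betaFn_add_one {a : ℕ} (ha : a ≠ 0) (b : ℕ) :
    a * betaFn a (b + 1) = ((a + b).choose a : ℝ)⁻¹ := by
  have ha' : (a : ℝ) ≠ 0 := Nat.cast_ne_zero.2 ha
  rw [betaFn_eq_beta (by positivity) (by positivity), ProbabilityTheory.beta, ← mul_div_assoc,
    ← mul_assoc, ← Real.Gamma_add_one ha', ← add_assoc, ← Nat.cast_add,
    Real.Gamma_nat_eq_factorial, Real.Gamma_nat_eq_factorial, Real.Gamma_nat_eq_factorial,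
    Nat.cast_add_choose, inv_div]

lemma hasDerivAt_rpow_mul_one_sub_rpow (a b : ℝ) {t : ℝ} (ht : t ∈ Ioo (0 : ℝ) 1) :
    HasDerivAt (fun t : ℝ ↦ t ^ a * (1 - t) ^ b)
      (a * (t ^ (a - 1) * (1 - t) ^ (b - 1)) -
        (a + b) * (t ^ (a + 1 - 1) * (1 - t) ^ (b - 1))) t := by
  have ht₀ : t ≠ 0 := ht.1.ne'
  have ht₁ : 1 - t ≠ 0 := (sub_pos.2 ht.2).ne'
  have hleft := Real.hasDerivAt_rpow_const (p := a) (Or.inl ht₀)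
  have hright := ((hasDerivAt_id t).const_sub 1).rpow_const (p := b) (Or.inl ht₁)
  refine (hleft.mul hright).congr_deriv ?_
  have hta : t ^ a = t ^ (a - 1) * t := by rw [Real.rpow_sub_one ht₀, div_mul_cancel₀ _ ht₀]
  have htb : (1 - t) ^ b = (1 - t) ^ (b - 1) * (1 - t) := by
    rw [Real.rpow_sub_one ht₁, div_mul_cancel₀ _ ht₁]
  simp only [id, add_sub_cancel_right, hta, htb]
  ring

lemma add_mul_upperBeta_add_one_left (ha : 0 < a) (hb : 0 < b) (hx : x ∈ Icc (0 : ℝ) 1) :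
    (a + b) * upperBeta x (a + 1) b = a * upperBeta x a b + x ^ a * (1 - x) ^ b := by
  have hone : (1 : ℝ) ∈ Icc (0 : ℝ) 1 := right_mem_Icc.2 zero_le_one
  have hint := (intervalIntegrable_rpow_mul_one_sub_rpow ha hb hx hone).const_mul a
  have hint' := (intervalIntegrable_rpow_mul_one_sub_rpow (add_pos ha one_pos) hb hx
    hone).const_mul (a + b)
  have hcont : ContinuousOn (fun t : ℝ ↦ t ^ a * (1 - t) ^ b) (Icc x 1) :=
    ((Real.continuous_rpow_const ha.le).mul
      ((Real.continuous_rpow_const hb.le).comp (continuous_const.sub continuous_id))).continuousOn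
  have hftc := intervalIntegral.integral_eq_sub_of_hasDerivAt_of_le hx.2 hcont
    (fun t ht ↦ hasDerivAt_rpow_mul_one_sub_rpow a b ⟨hx.1.trans_lt ht.1, ht.2⟩) (hint.sub hint')
  rw [intervalIntegral.integral_sub hint hint', intervalIntegral.integral_const_mul,
    intervalIntegral.integral_const_mul, sub_self, Real.zero_rpow hb.ne', mul_zero] at hftc
  rw [upperBeta, upperBeta]
  linarith

lemma add_mul_betaFn_add_one_left (ha : 0 < a) (hb : 0 < b) :
    (a + b) * betaFn (a + 1) b = a * betaFn a b := by
  simpa [betaFn_eq_upperBeta, Real.zero_rpow ha.ne'] using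
    add_mul_upperBeta_add_one_left ha hb (left_mem_Icc.2 zero_le_one)

end BetaIntegral

section UpperHalfProbability

variable {a b : ℝ}

lemma I_add_one_left (ha : 0 < a) (hb : 0 < b) :
    I (a + 1) b = I a b + (1 / 2) ^ (a + b) / (a * betaFn a b) := by
  have hB := (betaFn_pos ha hb).ne'
  have hab : a + b ≠ 0 := (add_pos ha hb).ne'
  have htail := add_mul_upperBeta_add_one_left ha hb (x := 1 / 2) (by norm_num)
  rw [sub_half, ← Real.rpow_add one_half_pos] at htail
  rw [I_eq_upperBeta_div, I_eq_upperBeta_div, eq_div_of_mul_eq hab ((mul_comm _ _).trans htail),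
    eq_div_of_mul_eq hab ((mul_comm _ _).trans (add_mul_betaFn_add_one_left ha hb))]
  field_simp

lemma I_add_I_swap (ha : 0 < a) (hb : 0 < b) : I a b + I b a = 1 := by
  have hsplit := upperBeta_add_upperBeta_one_sub ha hb (x := 1 / 2) (by norm_num)
  rw [sub_half] at hsplit
  rw [I_eq_upperBeta_div, I_eq_upperBeta_div, betaFn_comm b a, ← add_div, hsplit,
    div_self (betaFn_pos ha hb).ne']

lemma I_self (ha : 0 < a) : I a a = 1 / 2 := by
  linarith [I_add_I_swap ha ha]

lemma I_one_right (ha : 0 < a) : I a 1 = 1 - (1 / 2) ^ a := by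
  rw [I_eq_upperBeta_div, betaFn_eq_upperBeta, upperBeta_one_right ha, upperBeta_one_right ha,
    Real.zero_rpow ha.ne', sub_zero, div_div_div_cancel_right₀ ha.ne', div_one]

lemma I_natCast_add_one_left {a : ℕ} (ha : a ≠ 0) (b : ℕ) :
    I (a + 1) (b + 1) = I a (b + 1) + (a + b).choose a / 2 ^ (a + b + 1) := by
  have hpow : (1 / 2 : ℝ) ^ ((a : ℝ) + (b + 1)) = 1 / 2 ^ (a + b + 1) := by
    rw [← one_div_pow, ← Real.rpow_natCast]
    push_cast
    rw [add_assoc]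
  rw [I_add_one_left (by positivity) (by positivity), natCast_mul_betaFn_add_one ha, hpow,
    div_inv_eq_mul, one_div_mul_eq_div]

end UpperHalfProbability

lemma choose_succ_lt_two_pow {n : ℕ} (hn : 2 ≤ n) (k : ℕ) : (n + 1).choose k < 2 ^ n := by
  induction n, hn using Nat.le_induction generalizing k with
  | base =>
    obtain hk | hk := le_or_gt k 3
    · interval_cases k <;> decide
    · simp [Nat.choose_eq_zero_of_lt hk]
  | succ n _ ih =>
    cases k with
    | zero => simp
    | succ k =>
      rw [Nat.choose_succ_succ, pow_succ, mul_two]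
      exact add_lt_add (ih k) (ih (k + 1))

lemma hFn_one_sub (x : ℝ) : hFn (1 - x) = hFn x := by
  rw [hFn, hFn, sub_sub_cancel, max_comm]

lemma half_le_hFn (x : ℝ) : 1 / 2 ≤ hFn x := by
  rw [hFn, le_max_iff]
  by_contra! h
  linarith

lemma abs_hFn_sub_hFn_le (x y : ℝ) : |hFn x - hFn y| ≤ |x - y| := by
  simpa [hFn, abs_sub_comm y x] using abs_max_sub_max_le_max x (1 - x) y (1 - y)

/-- The change of `h (I a b)` when a success is observed. By reflection, the change when a failure
is observed is `successReward b a`. -/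
noncomputable def successReward (a b : ℝ) : ℝ := hFn (I (a + 1) b) - hFn (I a b)

section PessimisticReward

variable {a b : ℝ}

lemma hFn_I_comm (ha : 0 < a) (hb : 0 < b) : hFn (I a b) = hFn (I b a) := by
  rw [eq_sub_of_add_eq (I_add_I_swap ha hb), hFn_one_sub]

lemma Rminus_eq_min_successReward (ha : 0 < a) (hb : 0 < b) :
    Rminus a b = min (successReward a b) (successReward b a) := by
  rw [Rminus, hFn_I_comm ha (add_pos hb one_pos), successReward, successReward, hFn_I_comm hb ha]

lemma Rminus_comm (ha : 0 < a) (hb : 0 < b) : Rminus a b = Rminus b a := by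
  rw [Rminus_eq_min_successReward ha hb, Rminus_eq_min_successReward hb ha, min_comm]

lemma Rminus_self_nonneg (ha : 0 < a) : 0 ≤ Rminus a a := by
  have hcurrent : hFn (I a a) = 1 / 2 := by norm_num [I_self ha, hFn]
  rw [Rminus_eq_min_successReward ha ha, min_self, successReward, hcurrent]
  exact sub_nonneg.2 (half_le_hFn _)

lemma Rminus_two_one : Rminus 2 1 = -1 / 4 := by
  have h21 : I 2 1 = 3 / 4 := by norm_num [I_one_right]
  have h31 : I 3 1 = 7 / 8 := by norm_num [I_one_right]
  have h22 : I 2 2 = 1 / 2 := I_self two_pos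
  norm_num [Rminus, hFn, h21, h31, h22]

lemma neg_quarter_lt_successReward {a b : ℕ} (ha : a ≠ 0) (hb : b ≠ 0) (hab : 4 ≤ a + b) :
    -1 / 4 < successReward a b := by
  obtain ⟨b, rfl⟩ := Nat.exists_eq_succ_of_ne_zero hb
  obtain ⟨n, hn⟩ : ∃ n, a + b = n + 1 := ⟨a + b - 1, by omega⟩
  have hchoose : ((n + 1).choose a : ℝ) < 2 ^ n := by
    exact_mod_cast choose_succ_lt_two_pow (by omega : 2 ≤ n) a
  have hstep : |I (a + 1) (b + 1) - I a (b + 1)| < 1 / 4 := by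
    rw [I_natCast_add_one_left ha, add_sub_cancel_left, abs_of_nonneg (by positivity), hn,
      div_lt_iff₀ (by positivity), pow_succ, pow_succ]
    linarith
  rw [successReward, Nat.cast_succ]
  linarith [(abs_lt.1 ((abs_hFn_sub_hFn_le _ _).trans_lt hstep)).1]

end PessimisticReward

theorem Rminus_two_one_min :
    Rminus 2 1 = Rminus 1 2 ∧
      ∀ a b : ℕ, 0 < a → 0 < b → a + b ≠ 3 → Rminus 2 1 < Rminus a b := by
  refine ⟨Rminus_comm two_pos one_pos, fun a b ha hb hab ↦ ?_⟩
  rw [Rminus_two_one]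
  obtain rfl | hsum : a = b ∨ 4 ≤ a + b := by omega
  · exact lt_of_lt_of_le (by norm_num) (Rminus_self_nonneg (Nat.cast_pos.2 ha))
  · rw [Rminus_eq_min_successReward (Nat.cast_pos.2 ha) (Nat.cast_pos.2 hb)]
    exact lt_min (neg_quarter_lt_successReward ha.ne' hb.ne' hsum)
      (neg_quarter_lt_successReward hb.ne' ha.ne' (by omega))
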